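/- arXiv:1307.4709 — 2 statements merged into one kernel-verified Lean document; each statement's English description precedes it below -/
import Mathlib

section
/- Overestimation of the non-conforming majorant by at most a factor 2: let ṽ ∈ L²(Ω;ℝ^N) and E := ∇û − A^{−1}ṽ. The field v̂ := A∇û has weak divergence −f ∈ L²₊₁(Ω) and satisfies M₊(A^{−1}ṽ, v̂) = c_{N,α}‖f + div v̂‖_{L²₊₁(Ω)} + ‖A^{−1}(ṽ − v̂)‖_A = ‖E‖_A, and the choice u = û (which satisfies û − u = 0 ∈ H¹°₋₁(Ω)) gives M̃₊(A^{−1}ṽ, ∇û) = ‖∇û − A^{−1}ṽ‖_A = ‖E‖_A; consequently the combined majorant 𝓜₊(ṽ) := inf_v M₊² + inf_u M̃₊² satisfies 𝓜₊(ṽ) ≤ 2‖E‖²_A. -/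
open MeasureTheory Filter Topology
open scoped RealInnerProductSpace

noncomputable section

/-- Euclidean space `ℝ^N`. -/
abbrev Euc (N : ℕ) := EuclideanSpace ℝ (Fin N)

/-- The Poincaré constant `c_N = 2/(N-2)`. -/
def cN (N : ℕ) : ℝ := 2 / ((N : ℝ) - 2)

variable {N : ℕ}

/-- Squared weighted `L²_s(Ω)` norm: `∫_Ω (1+|x|²)^s u(x)² dx`. -/
def sqL2 (Ω : Set (Euc N)) (s : ℝ) (u : Euc N → ℝ) : ℝ :=
  ∫ x in Ω, (1 + ‖x‖ ^ 2) ^ s * u x ^ 2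

/-- Weighted `L²_s(Ω)` norm. -/
def nrmL2 (Ω : Set (Euc N)) (s : ℝ) (u : Euc N → ℝ) : ℝ :=
  Real.sqrt (sqL2 Ω s u)

/-- Membership in the weighted space `L²_s(Ω)` (scalar functions). -/
def MemL2 (Ω : Set (Euc N)) (s : ℝ) (u : Euc N → ℝ) : Prop :=
  AEStronglyMeasurable u (volume.restrict Ω) ∧
    Integrable (fun x => (1 + ‖x‖ ^ 2) ^ s * u x ^ 2) (volume.restrict Ω)

/-- Squared weighted `L²_s(Ω;ℝ^N)` norm for vector fields. -/
def sqL2V (Ω : Set (Euc N)) (s : ℝ) (v : Euc N → Euc N) : ℝ :=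
  ∫ x in Ω, (1 + ‖x‖ ^ 2) ^ s * ‖v x‖ ^ 2

/-- Weighted `L²_s(Ω;ℝ^N)` norm for vector fields. -/
def nrmL2V (Ω : Set (Euc N)) (s : ℝ) (v : Euc N → Euc N) : ℝ :=
  Real.sqrt (sqL2V Ω s v)

/-- Membership in the weighted space `L²_s(Ω;ℝ^N)` (vector fields). -/
def MemL2V (Ω : Set (Euc N)) (s : ℝ) (v : Euc N → Euc N) : Prop :=
  AEStronglyMeasurable v (volume.restrict Ω) ∧
    Integrable (fun x => (1 + ‖x‖ ^ 2) ^ s * ‖v x‖ ^ 2) (volume.restrict Ω)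

/-- Test functions: `φ ∈ C_c^∞(Ω)`. -/
def IsTest (Ω : Set (Euc N)) (φ : Euc N → ℝ) : Prop :=
  ContDiff ℝ (⊤ : ℕ∞) φ ∧ HasCompactSupport φ ∧ tsupport φ ⊆ Ω

/-- `g` is the weak gradient of `u` on `Ω`:
`∫_Ω u ∇φ = −∫_Ω φ g` for all test functions `φ`. -/
def IsWeakGrad (Ω : Set (Euc N)) (u : Euc N → ℝ) (g : Euc N → Euc N) : Prop :=
  ∀ φ : Euc N → ℝ, IsTest Ω φ →
    (∫ x in Ω, u x • gradient φ x) = - ∫ x in Ω, φ x • g x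

/-- `d` is the weak divergence of the vector field `v` on `Ω`:
`∫_Ω v·∇φ = −∫_Ω d φ` for all test functions `φ`. -/
def IsWeakDiv (Ω : Set (Euc N)) (v : Euc N → Euc N) (d : Euc N → ℝ) : Prop :=
  ∀ φ : Euc N → ℝ, IsTest Ω φ →
    (∫ x in Ω, ⟪v x, gradient φ x⟫) = - ∫ x in Ω, d x * φ x

/-- `u ∈ H¹°₋₁(Ω)` with weak gradient `g`: `u ∈ L²₋₁(Ω)`, `g ∈ L²(Ω;ℝ^N)` is the weak
gradient of `u`, and `u` is approximated by test functions in the natural norms. -/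
def MemH10 (Ω : Set (Euc N)) (u : Euc N → ℝ) (g : Euc N → Euc N) : Prop :=
  MemL2 Ω (-1) u ∧ MemL2V Ω 0 g ∧ IsWeakGrad Ω u g ∧
    ∃ φ : ℕ → Euc N → ℝ, (∀ n, IsTest Ω (φ n)) ∧
      Tendsto (fun n => nrmL2 Ω (-1) (fun x => u x - φ n x)) atTop (𝓝 0) ∧
      Tendsto (fun n => nrmL2V Ω 0 (fun x => g x - gradient (φ n) x)) atTop (𝓝 0)

/-- `g ∈ 𝒢`, the closure in `L²(Ω;ℝ^N)` of `{∇φ : φ ∈ C_c^∞(Ω)}`. -/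
def MemG (Ω : Set (Euc N)) (g : Euc N → Euc N) : Prop :=
  MemL2V Ω 0 g ∧
    ∃ φ : ℕ → Euc N → ℝ, (∀ n, IsTest Ω (φ n)) ∧
      Tendsto (fun n => nrmL2V Ω 0 (fun x => g x - gradient (φ n) x)) atTop (𝓝 0)

/-- `ψ ∈ D₀`, the set of weakly divergence-free fields in `L²(Ω;ℝ^N)`. -/
def MemD0 (Ω : Set (Euc N)) (ψ : Euc N → Euc N) : Prop :=
  MemL2V Ω 0 ψ ∧
    ∀ φ : Euc N → ℝ, IsTest Ω φ → (∫ x in Ω, ⟪ψ x, gradient φ x⟫) = 0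

/-- The coefficient matrix field `A : Ω → ℝ^{N×N}`: measurable, essentially bounded,
symmetric, and uniformly coercive (`A(x)ξ·ξ ≥ α⁻²|ξ|²` for a.e. `x ∈ Ω`). -/
structure Coeff (N : ℕ) (Ω : Set (Euc N)) where
  A : Euc N → Euc N →L[ℝ] Euc N
  α : ℝ
  α_pos : 0 < α
  meas : ∀ ξ : Euc N, AEStronglyMeasurable (fun x => A x ξ) (volume.restrict Ω)
  bdd : ∃ C : ℝ, ∀ᵐ x ∂(volume.restrict Ω), ∀ ξ : Euc N, ‖A x ξ‖ ≤ C * ‖ξ‖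
  symm : ∀ x : Euc N, ∀ ξ η : Euc N, ⟪A x ξ, η⟫ = ⟪ξ, A x η⟫
  coer : ∀ᵐ x ∂(volume.restrict Ω), ∀ ξ : Euc N, α⁻¹ ^ 2 * ‖ξ‖ ^ 2 ≤ ⟪A x ξ, ξ⟫

/-- The weighted inner product `⟨v,w⟩_A = ∫_Ω A v · w dx`. -/
def ipA (Ω : Set (Euc N)) (A : Euc N → Euc N →L[ℝ] Euc N) (v w : Euc N → Euc N) : ℝ :=
  ∫ x in Ω, ⟪A x (v x), w x⟫

/-- The squared `A`-weighted norm `‖v‖²_A = ∫_Ω A v · v dx`. -/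
def sqA (Ω : Set (Euc N)) (A : Euc N → Euc N →L[ℝ] Euc N) (v : Euc N → Euc N) : ℝ :=
  ipA Ω A v v

/-- The `A`-weighted norm `‖v‖_A`. -/
def nrmA (Ω : Set (Euc N)) (A : Euc N → Euc N →L[ℝ] Euc N) (v : Euc N → Euc N) : ℝ :=
  Real.sqrt (sqA Ω A v)

/-- `w = A⁻¹ v` (a.e. on `Ω`), with `w ∈ L²(Ω;ℝ^N)`. -/
def IsAInv (Ω : Set (Euc N)) (A : Euc N → Euc N →L[ℝ] Euc N) (v w : Euc N → Euc N) : Prop :=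
  MemL2V Ω 0 w ∧ ∀ᵐ x ∂(volume.restrict Ω), A x (w x) = v x

/-! The exact flux `A∇û` has divergence `-f`, so its equilibrium residual vanishes, and since `A` is
a.e. injective the rest of the flux majorant is exactly the energy norm of `∇û - A⁻¹ṽ`. The
conformity majorant takes the same value at `u = û`. Each infimum is therefore at most the squared
energy norm of the error. -/

section Measurability

variable {X 𝕜 E F : Type*} [MeasurableSpace X] {μ : Measure X}
  [NontriviallyNormedField 𝕜] [CompleteSpace 𝕜]
  [NormedAddCommGroup E] [NormedSpace 𝕜 E] [FiniteDimensional 𝕜 E]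
  [NormedAddCommGroup F] [NormedSpace 𝕜 F]

theorem aestronglyMeasurable_clm_apply {A : X → E →L[𝕜] F} {g : X → E}
    (hA : ∀ ξ, AEStronglyMeasurable (fun x => A x ξ) μ) (hg : AEStronglyMeasurable g μ) :
    AEStronglyMeasurable (fun x => A x (g x)) μ := by
  let b := Module.finBasis 𝕜 E
  have expand : (fun x => A x (g x)) = fun x => ∑ i, b.coord i (g x) • A x (b i) := by
    funext x
    conv_lhs => rw [← b.sum_repr (g x), map_sum]
    simp only [map_smul, Module.Basis.coord_apply]
  rw [expand]
  exact Finset.aestronglyMeasurable_fun_sum _ fun i _ =>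
    ((b.coord i).continuous_of_finiteDimensional.comp_aestronglyMeasurable hg).smul (hA (b i))

end Measurability

section WeightedSpaces

variable {Ω : Set (Euc N)} {s : ℝ}

theorem aestronglyMeasurable_weight (μ : Measure (Euc N)) (s : ℝ) :
    AEStronglyMeasurable (fun x : Euc N => (1 + ‖x‖ ^ 2) ^ s) μ := by
  have weight_continuous : Continuous fun x : Euc N => (1 + ‖x‖ ^ 2) ^ s :=
    Continuous.rpow_const (by fun_prop) fun x => Or.inl (by positivity)
  exact weight_continuous.aestronglyMeasurable

theorem MemL2V.clm_apply {A : Euc N → Euc N →L[ℝ] Euc N} {g : Euc N → Euc N}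
    (hA : ∀ ξ, AEStronglyMeasurable (fun x => A x ξ) (volume.restrict Ω))
    (hbdd : ∃ C : ℝ, ∀ᵐ x ∂volume.restrict Ω, ∀ ξ, ‖A x ξ‖ ≤ C * ‖ξ‖)
    (hg : MemL2V Ω s g) : MemL2V Ω s fun x => A x (g x) := by
  obtain ⟨C, hC⟩ := hbdd
  have hAg := aestronglyMeasurable_clm_apply hA hg.1
  refine ⟨hAg, (hg.2.const_mul (C ^ 2)).mono'
    ((aestronglyMeasurable_weight _ s).mul (hAg.norm.pow 2)) ?_⟩
  filter_upwards [hC] with x hx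
  calc ‖(1 + ‖x‖ ^ 2) ^ s * ‖A x (g x)‖ ^ 2‖
      = (1 + ‖x‖ ^ 2) ^ s * ‖A x (g x)‖ ^ 2 := Real.norm_of_nonneg (by positivity)
    _ ≤ (1 + ‖x‖ ^ 2) ^ s * (C * ‖g x‖) ^ 2 := by gcongr; exact hx (g x)
    _ = C ^ 2 * ((1 + ‖x‖ ^ 2) ^ s * ‖g x‖ ^ 2) := by ring

theorem MemL2.neg {f : Euc N → ℝ} (hf : MemL2 Ω s f) : MemL2 Ω s fun x => -f x :=
  ⟨hf.1.neg, by simpa only [neg_sq] using hf.2⟩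

theorem MemL2.zero : MemL2 Ω s fun _ => 0 :=
  ⟨aestronglyMeasurable_const, by simp⟩

theorem MemL2V.zero : MemL2V Ω s fun _ => 0 :=
  ⟨aestronglyMeasurable_const, by simp⟩

@[simp]
theorem nrmL2_zero : nrmL2 Ω s (fun _ => 0) = 0 := by
  simp [nrmL2, sqL2]

@[simp]
theorem nrmL2V_zero : nrmL2V Ω s (fun _ => 0) = 0 := by
  simp [nrmL2V, sqL2V]

end WeightedSpaces

section WeakDerivatives

variable {Ω : Set (Euc N)}

theorem IsTest.zero : IsTest Ω fun _ => 0 := by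
  refine ⟨contDiff_const, .zero, ?_⟩
  rw [tsupport, Function.support_fun_zero, closure_empty]
  exact Set.empty_subset Ω

theorem IsWeakGrad.zero : IsWeakGrad Ω (fun _ => 0) fun _ => 0 :=
  fun φ _ => by simp

theorem MemH10.zero : MemH10 Ω (fun _ => 0) fun _ => 0 :=
  ⟨MemL2.zero, MemL2V.zero, IsWeakGrad.zero, fun _ _ => 0, fun _ => IsTest.zero, by simp, by simp⟩

theorem MemH10.sub_self (u : Euc N → ℝ) (g : Euc N → Euc N) :
    MemH10 Ω (fun x => u x - u x) fun x => g x - g x := by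
  simpa only [_root_.sub_self] using MemH10.zero

theorem IsWeakDiv.of_integral_inner_gradient_eq {v : Euc N → Euc N} {f : Euc N → ℝ}
    (h : ∀ φ, IsTest Ω φ → ∫ x in Ω, ⟪v x, gradient φ x⟫ = ∫ x in Ω, f x * φ x) :
    IsWeakDiv Ω v fun x => -f x := fun φ hφ => by
  simp only [h φ hφ, neg_mul, integral_neg, neg_neg]

end WeakDerivatives

section EnergyNorm

variable {Ω : Set (Euc N)} {A : Euc N → Euc N →L[ℝ] Euc N} {v w g : Euc N → Euc N}

theorem sqA_nonneg (hA : ∀ᵐ x ∂volume.restrict Ω, ∀ ξ, 0 ≤ ⟪A x ξ, ξ⟫) : 0 ≤ sqA Ω A v :=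
  integral_nonneg_of_ae (hA.mono fun x hx => hx (v x))

theorem sq_nrmA (hA : ∀ᵐ x ∂volume.restrict Ω, ∀ ξ, 0 ≤ ⟪A x ξ, ξ⟫) :
    nrmA Ω A v ^ 2 = sqA Ω A v :=
  Real.sq_sqrt (sqA_nonneg hA)

theorem nrmA_congr_ae (h : v =ᵐ[volume.restrict Ω] w) : nrmA Ω A v = nrmA Ω A w := by
  refine congrArg Real.sqrt (integral_congr_ae ?_)
  filter_upwards [h] with x hx
  rw [hx]

theorem nrmA_sub_comm (v w : Euc N → Euc N) :
    nrmA Ω A (fun x => v x - w x) = nrmA Ω A fun x => w x - v x := by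
  refine congrArg Real.sqrt (integral_congr_ae (.of_forall fun x => ?_))
  dsimp only
  rw [← neg_sub (w x), map_neg, inner_neg_neg]

theorem MemL2V.isAInv_apply (hg : MemL2V Ω 0 g) : IsAInv Ω A (fun x => A x (g x)) g :=
  ⟨hg, .of_forall fun _ => rfl⟩

theorem IsAInv.ae_eq (hA : ∀ᵐ x ∂volume.restrict Ω, Function.Injective (A x))
    (hw : IsAInv Ω A v w) (hg : IsAInv Ω A v g) : w =ᵐ[volume.restrict Ω] g := by
  filter_upwards [hA, hw.2, hg.2] with x hinj hwx hgx
  exact hinj (hwx.trans hgx.symm)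

end EnergyNorm

section PositiveDefinite

variable {V : Type*} [NormedAddCommGroup V] [InnerProductSpace ℝ V] {T : V →L[ℝ] V}

theorem inner_apply_self_nonneg_of_pos (hT : ∀ ξ, ξ ≠ 0 → 0 < ⟪T ξ, ξ⟫) (ξ : V) :
    0 ≤ ⟪T ξ, ξ⟫ := by
  rcases eq_or_ne ξ 0 with rfl | hξ
  · rw [inner_zero_right]
  · exact (hT ξ hξ).le

theorem injective_of_inner_apply_self_pos (hT : ∀ ξ, ξ ≠ 0 → 0 < ⟪T ξ, ξ⟫) :
    Function.Injective T := by
  refine (injective_iff_map_eq_zero T).2 fun ξ hξ => ?_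
  by_contra hne
  simpa [hξ] using hT ξ hne

end PositiveDefinite

theorem Coeff.ae_inner_apply_self_pos {Ω : Set (Euc N)} (M : Coeff N Ω) :
    ∀ᵐ x ∂volume.restrict Ω, ∀ ξ, ξ ≠ 0 → 0 < ⟪M.A x ξ, ξ⟫ := by
  filter_upwards [M.coer] with x hx ξ hξ
  have hα := M.α_pos
  exact lt_of_lt_of_le (by positivity) (hx ξ)

section Majorants

variable {Ω : Set (Euc N)} {A : Euc N → Euc N →L[ℝ] Euc N} {c : ℝ} {f : Euc N → ℝ}
  {uh : Euc N → ℝ} {gu g : Euc N → Euc N}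

/-- The majorant `M₊(g, v) = c ‖f + div v‖_{L²₊₁(Ω)} + ‖g - A⁻¹v‖_A` of a gradient approximation
`g`. The field `v` enters only through `dv = div v` and `w = A⁻¹v`. -/
def fluxMajorant (Ω : Set (Euc N)) (A : Euc N → Euc N →L[ℝ] Euc N) (c : ℝ) (f : Euc N → ℝ)
    (g : Euc N → Euc N) (dv : Euc N → ℝ) (w : Euc N → Euc N) : ℝ :=
  c * nrmL2 Ω 1 (fun x => f x + dv x) + nrmA Ω A fun x => g x - w x

/-- The values `M₊(g, v)²` over all `v ∈ L²(Ω;ℝ^N)` with weak divergence in `L²₊₁(Ω)`; the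
infimum of this set is the equilibrium part of the combined majorant. -/
def fluxMajorantSqValues (Ω : Set (Euc N)) (A : Euc N → Euc N →L[ℝ] Euc N) (c : ℝ)
    (f : Euc N → ℝ) (g : Euc N → Euc N) : Set ℝ :=
  {r | ∃ (v : Euc N → Euc N) (dv : Euc N → ℝ) (w : Euc N → Euc N),
    MemL2V Ω 0 v ∧ MemL2 Ω 1 dv ∧ IsWeakDiv Ω v dv ∧ IsAInv Ω A v w ∧
    r = fluxMajorant Ω A c f g dv w ^ 2}

/-- The values `M̃₊(g, ∇u)² = ‖∇u - g‖²_A` over all `u` with `û - u ∈ H¹°₋₁(Ω)`, where `uh = û` and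
`gu = ∇û`; the infimum of this set is the conformity part of the combined majorant. -/
def conformityMajorantSqValues (Ω : Set (Euc N)) (A : Euc N → Euc N →L[ℝ] Euc N)
    (uh : Euc N → ℝ) (gu g : Euc N → Euc N) : Set ℝ :=
  {r | ∃ (u : Euc N → ℝ) (gu' : Euc N → Euc N),
    MemL2 Ω (-1) u ∧ MemL2V Ω 0 gu' ∧ IsWeakGrad Ω u gu' ∧
    MemH10 Ω (fun x => uh x - u x) (fun x => gu x - gu' x) ∧
    r = nrmA Ω A (fun x => gu' x - g x) ^ 2}

theorem fluxMajorant_neg_source (g w : Euc N → Euc N) :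
    fluxMajorant Ω A c f g (fun x => -f x) w = nrmA Ω A fun x => w x - g x := by
  simp only [fluxMajorant, add_neg_cancel, nrmL2_zero, mul_zero, zero_add, nrmA_sub_comm g]

theorem sInf_fluxMajorantSqValues_le {v w : Euc N → Euc N} {dv : Euc N → ℝ}
    (hv : MemL2V Ω 0 v) (hdv : MemL2 Ω 1 dv) (hdiv : IsWeakDiv Ω v dv) (hw : IsAInv Ω A v w) :
    sInf (fluxMajorantSqValues Ω A c f g) ≤ fluxMajorant Ω A c f g dv w ^ 2 := by
  refine csInf_le ⟨0, ?_⟩ ⟨v, dv, w, hv, hdv, hdiv, hw, rfl⟩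
  rintro _ ⟨v, dv, w, -, -, -, -, rfl⟩
  positivity

theorem sInf_conformityMajorantSqValues_le {u : Euc N → ℝ} {gu' : Euc N → Euc N}
    (hu : MemL2 Ω (-1) u) (hgu' : MemL2V Ω 0 gu') (hgrad : IsWeakGrad Ω u gu')
    (hH10 : MemH10 Ω (fun x => uh x - u x) (fun x => gu x - gu' x)) :
    sInf (conformityMajorantSqValues Ω A uh gu g) ≤ nrmA Ω A (fun x => gu' x - g x) ^ 2 := by
  refine csInf_le ⟨0, ?_⟩ ⟨u, gu', hu, hgu', hgrad, hH10, rfl⟩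
  rintro _ ⟨u, gu', -, -, -, -, rfl⟩
  positivity

end Majorants

theorem stmt_16_general {Ω : Set (Euc N)} {A : Euc N → Euc N →L[ℝ] Euc N}
    (hA : ∀ ξ, AEStronglyMeasurable (fun x => A x ξ) (volume.restrict Ω))
    (hbdd : ∃ C : ℝ, ∀ᵐ x ∂volume.restrict Ω, ∀ ξ, ‖A x ξ‖ ≤ C * ‖ξ‖)
    (hpos : ∀ᵐ x ∂volume.restrict Ω, ∀ ξ, ξ ≠ 0 → 0 < ⟪A x ξ, ξ⟫) (c : ℝ)
    {f : Euc N → ℝ} (hf : MemL2 Ω 1 f) {uh : Euc N → ℝ} {gu : Euc N → Euc N}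
    (huh : MemL2 Ω (-1) uh) (hgu : MemL2V Ω 0 gu) (hguw : IsWeakGrad Ω uh gu)
    (hweak : ∀ φ, IsTest Ω φ →
      ∫ x in Ω, ⟪A x (gu x), gradient φ x⟫ = ∫ x in Ω, f x * φ x)
    {vt wt : Euc N → Euc N} (_hwt : IsAInv Ω A vt wt) :
    MemL2V Ω 0 (fun x => A x (gu x)) ∧
    IsWeakDiv Ω (fun x => A x (gu x)) (fun x => -f x) ∧
    MemL2 Ω 1 (fun x => -f x) ∧
    (∀ w, IsAInv Ω A (fun x => A x (gu x)) w →
      fluxMajorant Ω A c f wt (fun x => -f x) w = nrmA Ω A fun x => gu x - wt x) ∧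
    MemH10 Ω (fun x => uh x - uh x) (fun x => gu x - gu x) ∧
    sInf (fluxMajorantSqValues Ω A c f wt) + sInf (conformityMajorantSqValues Ω A uh gu wt) ≤
      2 * sqA Ω A fun x => gu x - wt x := by
  have hflux := hgu.clm_apply hA hbdd
  have hdiv := IsWeakDiv.of_integral_inner_gradient_eq hweak
  have hinv : IsAInv Ω A (fun x => A x (gu x)) gu := hgu.isAInv_apply
  have hinj := hpos.mono fun _ => injective_of_inner_apply_self_pos
  have hnonneg := hpos.mono fun _ => inner_apply_self_nonneg_of_pos
  refine ⟨hflux, hdiv, hf.neg, fun w hw => ?_, .sub_self uh gu, ?_⟩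
  · rw [fluxMajorant_neg_source]
    exact nrmA_congr_ae ((hw.ae_eq hinj hinv).sub .rfl)
  · rw [two_mul, ← sq_nrmA hnonneg]
    refine add_le_add ?_ (sInf_conformityMajorantSqValues_le huh hgu hguw (.sub_self uh gu))
    rw [← fluxMajorant_neg_source (c := c) (f := f)]
    exact sInf_fluxMajorantSqValues_le hflux hf.neg hdiv hinv

/-- Overestimation of the combined non-conforming majorant by at most the factor 2:
`v̂ = A∇û` and `u = û` make both parts equal to `‖E‖_A`, hence `𝓜₊(ṽ) ≤ 2‖E‖²_A`. -/
theorem stmt_16 (Ω : Set (Euc N)) (hΩ : IsOpen Ω) (hN : 3 ≤ N) (M : Coeff N Ω)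
    (f : Euc N → ℝ) (hf : MemL2 Ω 1 f)
    (uh : Euc N → ℝ) (gu : Euc N → Euc N)
    (huh : MemL2 Ω (-1) uh) (hgu : MemL2V Ω 0 gu) (hguw : IsWeakGrad Ω uh gu)
    (hweak : ∀ φ : Euc N → ℝ, IsTest Ω φ →
      (∫ x in Ω, ⟪M.A x (gu x), gradient φ x⟫) = ∫ x in Ω, f x * φ x)
    (vt : Euc N → Euc N) (hvt : MemL2V Ω 0 vt)
    (wt : Euc N → Euc N) (hwt : IsAInv Ω M.A vt wt) :
    MemL2V Ω 0 (fun x => M.A x (gu x)) ∧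
    IsWeakDiv Ω (fun x => M.A x (gu x)) (fun x => - f x) ∧
    MemL2 Ω 1 (fun x => - f x) ∧
    (∀ w : Euc N → Euc N, IsAInv Ω M.A (fun x => M.A x (gu x)) w →
      M.α * cN N * nrmL2 Ω 1 (fun x => f x + - f x) + nrmA Ω M.A (fun x => wt x - w x) =
        nrmA Ω M.A (fun x => gu x - wt x)) ∧
    MemH10 Ω (fun x => uh x - uh x) (fun x => gu x - gu x) ∧
    sInf {r : ℝ | ∃ (v : Euc N → Euc N) (dv : Euc N → ℝ) (w : Euc N → Euc N),
        MemL2V Ω 0 v ∧ MemL2 Ω 1 dv ∧ IsWeakDiv Ω v dv ∧ IsAInv Ω M.A v w ∧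
        r = (M.α * cN N * nrmL2 Ω 1 (fun x => f x + dv x) +
          nrmA Ω M.A (fun x => wt x - w x)) ^ 2} +
      sInf {r : ℝ | ∃ (u : Euc N → ℝ) (gu' : Euc N → Euc N),
        MemL2 Ω (-1) u ∧ MemL2V Ω 0 gu' ∧ IsWeakGrad Ω u gu' ∧
        MemH10 Ω (fun x => uh x - u x) (fun x => gu x - gu' x) ∧
        r = nrmA Ω M.A (fun x => gu' x - wt x) ^ 2} ≤
      2 * sqA Ω M.A (fun x => gu x - wt x) :=
  stmt_16_general M.meas M.bdd M.ae_inner_apply_self_pos (M.α * cN N) hf huh hgu hguw hweak hwt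
end
end

section
/- Weaker non-conforming upper bound via the triangle inequality (Appendix): let ṽ ∈ L²(Ω;ℝ^N) and E := ∇û − A^{−1}ṽ. Then for every θ > 0, every v ∈ L²(Ω;ℝ^N) possessing a weak divergence div v ∈ L²₊₁(Ω), and every u ∈ L²₋₁(Ω) with weak gradient ∇u ∈ L²(Ω;ℝ^N) such that û − u ∈ H¹°₋₁(Ω), ‖E‖²_A ≤ (1 + 4/θ)(c_{N,α}‖f + div v‖_{L²₊₁(Ω)} + ‖A^{−1}(ṽ − v)‖_A)² + (4 + θ)‖∇u − A^{−1}ṽ‖²_A. -/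
open MeasureTheory Filter Topology
open scoped RealInnerProductSpace

noncomputable section

variable {N : ℕ}

/-!
Put `κ = α c_N ‖f + div v‖`. Tested against `∇φ`, the residual `∇û - A⁻¹v` gives
`∫ (f + div v) φ`, so duality of the weights, Hardy's inequality and coercivity yield
`⟨∇û - A⁻¹v, g⟩_A ≤ κ ‖g‖_A` for `g = ∇φ`, hence for every `g` in the `L²`-closure of the
gradients of test functions, such as `g = ∇û - ∇u`. The rest is Hilbert space geometry in the
seminorm `‖·‖_A`: if `⟨x - q, x - y⟩ ≤ κ ‖x - y‖`, then splitting `x - y` as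
`(x - q) - (p - q) - (y - p)` gives `‖x - y‖ ≤ κ + ‖p - q‖ + ‖y - p‖`, and the triangle inequality
bounds `‖x - p‖` by `κ + ‖p - q‖ + 2 ‖y - p‖`. Young's inequality splits the square.
-/

section HilbertSpace

variable {H : Type*} [SeminormedAddCommGroup H] [InnerProductSpace ℝ H]

lemma norm_sub_le_of_inner_sub_le {x y q : H} {κ : ℝ} (hκ : 0 ≤ κ)
    (h : ⟪x - q, x - y⟫ ≤ κ * ‖x - y‖) (p : H) :
    ‖x - p‖ ≤ κ + ‖p - q‖ + 2 * ‖y - p‖ := by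
  have hsq : ‖x - y‖ * ‖x - y‖ ≤ (κ + ‖p - q‖ + ‖y - p‖) * ‖x - y‖ := calc
    ‖x - y‖ * ‖x - y‖ = ⟪x - q, x - y⟫ - ⟪p - q, x - y⟫ - ⟪y - p, x - y⟫ := by
      rw [← real_inner_self_eq_norm_mul_norm, ← inner_sub_left, ← inner_sub_left]
      congr 1; abel
    _ ≤ κ * ‖x - y‖ + ‖p - q‖ * ‖x - y‖ + ‖y - p‖ * ‖x - y‖ := by
      linarith [neg_le_of_abs_le (abs_real_inner_le_norm (p - q) (x - y)),
        neg_le_of_abs_le (abs_real_inner_le_norm (y - p) (x - y))]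
    _ = (κ + ‖p - q‖ + ‖y - p‖) * ‖x - y‖ := by ring
  have hxy : ‖x - y‖ ≤ κ + ‖p - q‖ + ‖y - p‖ := by
    rcases (norm_nonneg (x - y)).eq_or_lt with h0 | hpos
    · rw [← h0]; positivity
    · exact le_of_mul_le_mul_right hsq hpos
  linarith [norm_sub_le_norm_sub_add_norm_sub x y p]

lemma add_two_mul_sq_le {θ : ℝ} (hθ : 0 < θ) (m a : ℝ) :
    (m + 2 * a) ^ 2 ≤ (1 + 4 / θ) * m ^ 2 + (4 + θ) * a ^ 2 := by
  have hdiff : (1 + 4 / θ) * m ^ 2 + (4 + θ) * a ^ 2 - (m + 2 * a) ^ 2 =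
      1 / θ * (2 * m - θ * a) ^ 2 := by field_simp; ring
  have : 0 ≤ 1 / θ * (2 * m - θ * a) ^ 2 := by positivity
  linarith

lemma norm_sub_sq_le_of_inner_sub_le {x y q : H} {κ θ : ℝ} (hκ : 0 ≤ κ)
    (h : ⟪x - q, x - y⟫ ≤ κ * ‖x - y‖) (hθ : 0 < θ) (p : H) :
    ‖x - p‖ ^ 2 ≤ (1 + 4 / θ) * (κ + ‖p - q‖) ^ 2 + (4 + θ) * ‖y - p‖ ^ 2 :=
  (pow_le_pow_left₀ (norm_nonneg _) (norm_sub_le_of_inner_sub_le hκ h p) 2).trans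
    (add_two_mul_sq_le hθ _ _)

end HilbertSpace

section Hardy

open Module

section RadialDerivative

variable {E : Type*} [NormedAddCommGroup E] [NormedSpace ℝ E] [MeasurableSpace E]
  {h : E → ℝ}

section Integrability

variable [OpensMeasurableSpace E] (μ : Measure E) [IsFiniteMeasureOnCompacts μ]

lemma integrable_clm_mul_fderiv_apply (hh : ContDiff ℝ 1 h) (hc : HasCompactSupport h)
    (ℓ : E →L[ℝ] ℝ) (v : E) : Integrable (fun x => ℓ x * fderiv ℝ h x v) μ :=
  (ℓ.continuous.mul ((hh.continuous_fderiv one_ne_zero).clm_apply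
    continuous_const)).integrable_of_hasCompactSupport (hc.fderiv_apply ℝ v).mul_left

lemma integrable_fderiv_apply_self (hh : ContDiff ℝ 1 h) (hc : HasCompactSupport h) :
    Integrable (fun x => fderiv ℝ h x x) μ :=
  ((hh.continuous_fderiv one_ne_zero).clm_apply continuous_id).integrable_of_hasCompactSupport
    ((hc.fderiv ℝ).mono' fun x hx => subset_tsupport _ fun h0 => hx (by simp [h0]))

end Integrability

variable [FiniteDimensional ℝ E] [BorelSpace E] (μ : Measure E) [μ.IsAddHaarMeasure]

lemma integral_clm_mul_fderiv_apply (hh : ContDiff ℝ 1 h) (hc : HasCompactSupport h)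
    (ℓ : E →L[ℝ] ℝ) (v : E) : ∫ x, ℓ x * fderiv ℝ h x v ∂μ = -(ℓ v * ∫ x, h x ∂μ) := by
  have hint : Integrable h μ := hh.continuous.integrable_of_hasCompactSupport hc
  rw [integral_mul_fderiv_eq_neg_fderiv_mul_of_integrable _
    (integrable_clm_mul_fderiv_apply μ hh hc ℓ v) _
    (fun x _ => ℓ.differentiableAt) (fun x _ => hh.differentiable one_ne_zero x)]
  · simp only [ContinuousLinearMap.fderiv, integral_const_mul]
  · simpa only [ContinuousLinearMap.fderiv] using hint.const_mul (ℓ v)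
  · exact (ℓ.continuous.mul hh.continuous).integrable_of_hasCompactSupport hc.mul_left

lemma integral_fderiv_apply_self (hh : ContDiff ℝ 1 h) (hc : HasCompactSupport h) :
    ∫ x, fderiv ℝ h x x ∂μ = -(finrank ℝ E * ∫ x, h x ∂μ) := by
  let b := finBasis ℝ E
  let coord (i : Fin (finrank ℝ E)) : E →L[ℝ] ℝ := (b.coord i).toContinuousLinearMap
  calc ∫ x, fderiv ℝ h x x ∂μ = ∫ x, ∑ i, coord i x * fderiv ℝ h x (b i) ∂μ := by
        congr 1 with x
        conv_lhs => rw [← b.sum_repr x, map_sum]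
        simp [coord]
    _ = ∑ i, -(coord i (b i) * ∫ x, h x ∂μ) := by
        rw [integral_finsetSum _ fun i _ => integrable_clm_mul_fderiv_apply μ hh hc _ _]
        simp only [integral_clm_mul_fderiv_apply μ hh hc]
    _ = -(finrank ℝ E * ∫ x, h x ∂μ) := by simp [coord]

end RadialDerivative

/-- The pointwise inequality behind Hardy's: `p`, `d`, `G` stand for `φ x`, `Dφ(x) x` and
`‖Dφ(x)‖`, and `r` for `‖x‖`. -/
lemma hardy_pointwise {c r p d G : ℝ} (hc : 0 < c) (hd : |d| ≤ G * r) :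
    c / 2 * ((1 + r ^ 2)⁻¹ * p ^ 2) ≤ 2 / c * G ^ 2 + ((c + 2) * (p ^ 2 * (1 + r ^ 2)⁻¹) +
      (2 * p * d * (1 + r ^ 2)⁻¹ - 2 * r ^ 2 * p ^ 2 * (1 + r ^ 2)⁻¹ ^ 2)) := by
  have hW : 0 < (1 + r ^ 2)⁻¹ := by positivity
  have hrW : r ^ 2 * (1 + r ^ 2)⁻¹ = 1 - (1 + r ^ 2)⁻¹ := by field_simp; ring
  set W := (1 + r ^ 2)⁻¹
  have hdG : W * d ^ 2 ≤ G ^ 2 := calc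
    W * d ^ 2 ≤ W * (G * r) ^ 2 :=
      mul_le_mul_of_nonneg_left (sq_le_sq' (neg_le_of_abs_le hd) (le_of_abs_le hd)) hW.le
    _ = G ^ 2 * (r ^ 2 * W) := by ring
    _ ≤ G ^ 2 := by rw [hrW]; nlinarith [sq_nonneg G]
  have hyoung : 0 ≤ W * (2 / c * d ^ 2 + 2 * p * d + c / 2 * p ^ 2) := by
    have : 2 / c * d ^ 2 + 2 * p * d + c / 2 * p ^ 2 = 1 / (2 * c) * (2 * d + c * p) ^ 2 := by
      field_simp; ring
    rw [this]; positivity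
  have hr : 2 * r ^ 2 * p ^ 2 * W ^ 2 = 2 * p ^ 2 * W - 2 * p ^ 2 * W ^ 2 := by
    linear_combination 2 * p ^ 2 * W * hrW
  have hscaled := mul_le_mul_of_nonneg_left hdG (by positivity : 0 ≤ 2 / c)
  have hrest : 0 ≤ 2 * p ^ 2 * W ^ 2 := by positivity
  rw [hr]
  linarith

variable {E : Type*} [NormedAddCommGroup E] [InnerProductSpace ℝ E]

lemma contDiff_inv_one_add_norm_sq {n : WithTop ℕ∞} :
    ContDiff ℝ n fun x : E => (1 + ‖x‖ ^ 2)⁻¹ :=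
  (contDiff_const.add (contDiff_norm_sq ℝ)).inv fun x => by positivity

lemma fderiv_sq_mul_inv_one_add_norm_sq_apply_self {φ : E → ℝ} {x : E}
    (hφ : DifferentiableAt ℝ φ x) :
    fderiv ℝ (fun y => φ y ^ 2 * (1 + ‖y‖ ^ 2)⁻¹) x x =
      2 * φ x * fderiv ℝ φ x x * (1 + ‖x‖ ^ 2)⁻¹ -
        2 * ‖x‖ ^ 2 * φ x ^ 2 * (1 + ‖x‖ ^ 2)⁻¹ ^ 2 := by
  have hx : 1 + ‖x‖ ^ 2 ≠ 0 := by positivity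
  have hweight := (hasDerivAt_inv hx).comp_hasFDerivAt x
    ((hasStrictFDerivAt_norm_sq x).hasFDerivAt.const_add 1)
  have hprod := (hφ.hasFDerivAt.pow 2).mul hweight
  rw [HasFDerivAt.fderiv (f := fun y => φ y ^ 2 * (1 + ‖y‖ ^ 2)⁻¹) hprod]
  simp only [neg_smul, smul_neg, Function.comp_apply, Nat.add_one_sub_one, pow_one, nsmul_eq_mul,
    Nat.cast_ofNat, add_apply, neg_apply, smul_apply, coe_innerSL_apply,
    real_inner_self_eq_norm_sq, smul_eq_mul, inv_pow]
  ring

variable [FiniteDimensional ℝ E] [MeasurableSpace E] [BorelSpace E] (μ : Measure E)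
  [μ.IsAddHaarMeasure]

-- The field `x ↦ h x • x` with `h = φ² / (1 + ‖x‖²)` has divergence `n h + Dh(x) x`, of integral
-- zero; adding this to the right-hand side reduces the claim to `hardy_pointwise`.
theorem integral_inv_one_add_norm_sq_mul_sq_le (hE : 2 < finrank ℝ E) {φ : E → ℝ}
    (hφ : ContDiff ℝ 1 φ) (hc : HasCompactSupport φ) :
    ∫ x, (1 + ‖x‖ ^ 2)⁻¹ * φ x ^ 2 ∂μ ≤
      (2 / ((finrank ℝ E : ℝ) - 2)) ^ 2 * ∫ x, ‖fderiv ℝ φ x‖ ^ 2 ∂μ := by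
  let h : E → ℝ := fun x => φ x ^ 2 * (1 + ‖x‖ ^ 2)⁻¹
  have hh : ContDiff ℝ 1 h := (hφ.pow 2).mul contDiff_inv_one_add_norm_sq
  have hhc : HasCompactSupport h :=
    hc.mono' fun x hx => subset_tsupport φ fun h0 => hx (by simp [h, h0])
  have hhint : Integrable h μ := hh.continuous.integrable_of_hasCompactSupport hhc
  have hDhint := integrable_fderiv_apply_self μ hh hhc
  have hGint : Integrable (fun x => ‖fderiv ℝ φ x‖ ^ 2) μ :=
    ((hφ.continuous_fderiv one_ne_zero).norm.pow 2).integrable_of_hasCompactSupport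
      ((hc.fderiv ℝ).mono' fun x hx => subset_tsupport _ fun h0 => hx (by simp [h0]))
  set c : ℝ := (finrank ℝ E : ℝ) - 2 with hcdef
  have hcpos : 0 < c := sub_pos.2 (by exact_mod_cast hE)
  have hdivint : Integrable (fun x => (c + 2) * h x + fderiv ℝ h x x) μ :=
    (hhint.const_mul _).add hDhint
  have hdiv : ∫ x, (c + 2) * h x + fderiv ℝ h x x ∂μ = 0 := by
    rw [integral_add (hhint.const_mul _) hDhint, integral_const_mul,
      integral_fderiv_apply_self μ hh hhc, hcdef]
    ring
  have hyoung : c / 2 * ∫ x, (1 + ‖x‖ ^ 2)⁻¹ * φ x ^ 2 ∂μ ≤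
      2 / c * ∫ x, ‖fderiv ℝ φ x‖ ^ 2 ∂μ := by
    rw [← integral_const_mul, ← integral_const_mul, ← add_zero (∫ x, 2 / c * _ ∂μ), ← hdiv,
      ← integral_add (hGint.const_mul _) hdivint]
    refine integral_mono ((hhint.const_mul (c / 2)).congr (.of_forall fun x => ?_))
      ((hGint.const_mul _).add hdivint) fun x => ?_
    · simp only [h, mul_comm]
    · simp only [h, fderiv_sq_mul_inv_one_add_norm_sq_apply_self
        (hφ.differentiable one_ne_zero x)]
      exact hardy_pointwise hcpos ((fderiv ℝ φ x).le_opNorm x)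
  calc ∫ x, (1 + ‖x‖ ^ 2)⁻¹ * φ x ^ 2 ∂μ
      = 2 / c * (c / 2 * ∫ x, (1 + ‖x‖ ^ 2)⁻¹ * φ x ^ 2 ∂μ) := by field_simp
    _ ≤ 2 / c * (2 / c * ∫ x, ‖fderiv ℝ φ x‖ ^ 2 ∂μ) := by gcongr
    _ = (2 / c) ^ 2 * ∫ x, ‖fderiv ℝ φ x‖ ^ 2 ∂μ := by ring

end Hardy

section WeightedL2

lemma integral_mul_le_sqrt_mul_sqrt {X : Type*} [MeasurableSpace X] {μ : Measure X}
    {f g : X → ℝ} (hf : MemLp f 2 μ) (hg : MemLp g 2 μ) :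
    ∫ x, f x * g x ∂μ ≤ √(∫ x, f x ^ 2 ∂μ) * √(∫ x, g x ^ 2 ∂μ) := calc
  ∫ x, f x * g x ∂μ ≤ ∫ x, ‖f x‖ * ‖g x‖ ∂μ :=
    integral_mono (hf.integrable_mul hg) (hf.norm.integrable_mul hg.norm) fun x =>
      (le_abs_self _).trans_eq (abs_mul _ _)
  _ ≤ √(∫ x, f x ^ 2 ∂μ) * √(∫ x, g x ^ 2 ∂μ) := by
    have holder := integral_mul_norm_le_Lp_mul_Lq (μ := μ) (f := f) (g := g)
      Real.HolderConjugate.two_two (by simpa using hf) (by simpa using hg)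
    simpa only [Real.sqrt_eq_rpow, Real.rpow_two, Real.norm_eq_abs, sq_abs] using holder

variable {Ω : Set (Euc N)} {s : ℝ} {f g : Euc N → ℝ}

lemma one_add_sq_rpow_half_mul_sq (s r t : ℝ) :
    ((1 + r ^ 2) ^ (s / 2) * t) ^ 2 = (1 + r ^ 2) ^ s * t ^ 2 := by
  rw [mul_pow, ← Real.rpow_mul_natCast (by positivity)]
  norm_num

lemma one_add_sq_rpow_half_mul_mul_rpow_neg_half_mul (s r a b : ℝ) :
    (1 + r ^ 2) ^ (s / 2) * a * ((1 + r ^ 2) ^ (-s / 2) * b) = a * b := by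
  have hpos : 0 < 1 + r ^ 2 := by positivity
  rw [mul_mul_mul_comm, ← Real.rpow_add hpos, neg_div, add_neg_cancel, Real.rpow_zero, one_mul]

lemma continuous_one_add_norm_sq_rpow {E : Type*} [SeminormedAddCommGroup E] (s : ℝ) :
    Continuous fun x : E => (1 + ‖x‖ ^ 2) ^ s :=
  (by fun_prop : Continuous fun x : E => 1 + ‖x‖ ^ 2).rpow_const
    fun x => Or.inl (by positivity)

lemma memL2_iff_memLp :
    MemL2 Ω s f ↔ MemLp (fun x => (1 + ‖x‖ ^ 2) ^ (s / 2) * f x) 2 (volume.restrict Ω) := by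
  have hweight (r : ℝ) := (continuous_one_add_norm_sq_rpow (E := Euc N) r).aestronglyMeasurable
    (μ := volume.restrict Ω)
  constructor
  · rintro ⟨hf, hint⟩
    refine (memLp_two_iff_integrable_sq ((hweight _).mul hf)).2 ?_
    simpa only [Pi.mul_apply, one_add_sq_rpow_half_mul_sq] using hint
  · intro hf
    refine ⟨?_, by simpa only [one_add_sq_rpow_half_mul_sq] using hf.integrable_sq⟩
    refine (hf.1.mul (hweight (-s / 2))).congr (.of_forall fun x => ?_)
    simpa using one_add_sq_rpow_half_mul_mul_rpow_neg_half_mul s ‖x‖ (f x) 1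

namespace MemL2

lemma add (hf : MemL2 Ω s f) (hg : MemL2 Ω s g) : MemL2 Ω s fun x => f x + g x := by
  rw [memL2_iff_memLp] at *
  simp only [mul_add]
  exact hf.add hg

lemma integrable_mul (hf : MemL2 Ω s f) (hg : MemL2 Ω (-s) g) :
    Integrable (fun x => f x * g x) (volume.restrict Ω) := by
  simpa only [Pi.mul_def, one_add_sq_rpow_half_mul_mul_rpow_neg_half_mul] using
    (memL2_iff_memLp.1 hf).integrable_mul (memL2_iff_memLp.1 hg)

lemma integral_mul_le (hf : MemL2 Ω s f) (hg : MemL2 Ω (-s) g) :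
    ∫ x in Ω, f x * g x ≤ nrmL2 Ω s f * nrmL2 Ω (-s) g := by
  simpa only [nrmL2, sqL2, one_add_sq_rpow_half_mul_mul_rpow_neg_half_mul,
    one_add_sq_rpow_half_mul_sq] using
    integral_mul_le_sqrt_mul_sqrt (memL2_iff_memLp.1 hf) (memL2_iff_memLp.1 hg)

end MemL2

lemma memL2V_zero_iff_memLp {v : Euc N → Euc N} :
    MemL2V Ω 0 v ↔ MemLp v 2 (volume.restrict Ω) := by
  simp only [MemL2V, Real.rpow_zero, one_mul]
  exact ⟨fun h => (memLp_two_iff_integrable_sq_norm h.1).2 h.2,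
    fun h => ⟨h.1, (memLp_two_iff_integrable_sq_norm h.1).1 h⟩⟩

lemma nrmL2V_zero_sq (Ω : Set (Euc N)) (v : Euc N → Euc N) :
    nrmL2V Ω 0 v ^ 2 = ∫ x in Ω, ‖v x‖ ^ 2 := by
  simp only [nrmL2V, sqL2V, Real.rpow_zero, one_mul]
  exact Real.sq_sqrt (integral_nonneg fun x => by positivity)

end WeightedL2

section TestFunctions

lemma norm_gradient_eq_norm_fderiv {E : Type*} [NormedAddCommGroup E] [InnerProductSpace ℝ E]
    [CompleteSpace E] (φ : E → ℝ) (x : E) :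
    ‖gradient φ x‖ = ‖fderiv ℝ φ x‖ := by
  simp [gradient]

lemma cN_nonneg (hN : 2 ≤ N) : 0 ≤ cN N :=
  div_nonneg zero_le_two (sub_nonneg.2 (by exact_mod_cast hN))

namespace IsTest

variable {Ω : Set (Euc N)} {φ : Euc N → ℝ}

lemma memL2 (hφ : IsTest Ω φ) (s : ℝ) : MemL2 Ω s φ := by
  refine ⟨hφ.1.continuous.aestronglyMeasurable, Integrable.restrict ?_⟩
  exact ((continuous_one_add_norm_sq_rpow s).mul
    (hφ.1.continuous.pow 2)).integrable_of_hasCompactSupport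
      (hφ.2.1.mono' fun x hx => subset_tsupport φ fun h0 => hx (by simp [h0]))

lemma memL2V_gradient (hφ : IsTest Ω φ) : MemL2V Ω 0 (gradient φ) := by
  have hcont : Continuous (gradient φ) :=
    (InnerProductSpace.toDual ℝ (Euc N)).symm.continuous.comp (hφ.1.continuous_fderiv (by simp))
  have hsupp : HasCompactSupport (gradient φ) :=
    (hφ.2.1.fderiv ℝ).comp_left (map_zero (InnerProductSpace.toDual ℝ (Euc N)).symm)
  exact memL2V_zero_iff_memLp.2 ((hcont.memLp_of_hasCompactSupport hsupp).restrict Ω)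

lemma nrmL2_le_cN_mul_nrmL2V_gradient (hφ : IsTest Ω φ) (hN : 3 ≤ N) :
    nrmL2 Ω (-1) φ ≤ cN N * nrmL2V Ω 0 (gradient φ) := by
  refine Real.sqrt_le_iff.2 ⟨mul_nonneg (cN_nonneg (by lia)) (Real.sqrt_nonneg _), ?_⟩
  have hφΩ (x) (hx : x ∉ Ω) : x ∉ tsupport φ := fun h => hx (hφ.2.2 h)
  have hsq : sqL2 Ω (-1) φ = ∫ x, (1 + ‖x‖ ^ 2)⁻¹ * φ x ^ 2 := by
    simp only [sqL2, Real.rpow_neg_one]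
    exact setIntegral_eq_integral_of_forall_compl_eq_zero fun x hx => by
      simp [image_eq_zero_of_notMem_tsupport (hφΩ x hx)]
  have hgrad : nrmL2V Ω 0 (gradient φ) ^ 2 = ∫ x, ‖fderiv ℝ φ x‖ ^ 2 := by
    simp only [nrmL2V_zero_sq, norm_gradient_eq_norm_fderiv]
    refine setIntegral_eq_integral_of_forall_compl_eq_zero fun x hx => ?_
    have : fderiv ℝ φ x = 0 :=
      image_eq_zero_of_notMem_tsupport fun h => hφΩ x hx (tsupport_fderiv_subset ℝ h)
    simp [this]
  have hhardy := integral_inv_one_add_norm_sq_mul_sq_le (volume : Measure (Euc N))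
    (by rw [finrank_euclideanSpace_fin]; lia) (hφ.1.of_le (by simp)) hφ.2.1
  rw [finrank_euclideanSpace_fin] at hhardy
  rwa [hsq, mul_pow, hgrad]

end IsTest

end TestFunctions

namespace Coeff

variable {Ω : Set (Euc N)} (M : Coeff N Ω) {v w : Euc N → Euc N}

lemma memLp_apply (hv : MemL2V Ω 0 v) :
    MemLp (fun x => M.A x (v x)) 2 (volume.restrict Ω) := by
  obtain ⟨C, hC⟩ := M.bdd
  refine (memL2V_zero_iff_memLp.1 hv).of_le_mul (c := C) ?_ (hC.mono fun x hx => hx (v x))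
  have hcoord (x) : M.A x (v x) = ∑ i, v x i • M.A x (EuclideanSpace.single i 1) := by
    conv_lhs => rw [← (EuclideanSpace.basisFun (Fin N) ℝ).sum_repr (v x)]
    simp
  simp only [hcoord]
  exact Finset.aestronglyMeasurable_fun_sum _ fun i _ =>
    ((EuclideanSpace.proj i : Euc N →L[ℝ] ℝ).continuous.comp_aestronglyMeasurable hv.1).smul
      (M.meas _)

lemma integrable_inner_apply (hv : MemL2V Ω 0 v) (hw : MemL2V Ω 0 w) :
    Integrable (fun x => ⟪M.A x (v x), w x⟫) (volume.restrict Ω) := by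
  have hAv := M.memLp_apply hv
  exact (hAv.norm.integrable_mul (memL2V_zero_iff_memLp.1 hw).norm).mono' (hAv.1.inner hw.1)
    (.of_forall fun x => norm_inner_le_norm _ _)

lemma ipA_comm (v w : Euc N → Euc N) : ipA Ω M.A v w = ipA Ω M.A w v :=
  integral_congr_ae (.of_forall fun x => (M.symm x _ _).trans (real_inner_comm _ _))

lemma sqA_nonneg (v : Euc N → Euc N) : 0 ≤ sqA Ω M.A v :=
  integral_nonneg_of_ae (M.coer.mono fun x hx => le_trans (by positivity) (hx (v x)))

end Coeff

/-- The vector fields in `L²(Ω;ℝ^N)`, as functions and not as classes modulo equality a.e. -/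
def l2Fields (Ω : Set (Euc N)) : Submodule ℝ (Euc N → Euc N) where
  carrier := {v | MemL2V Ω 0 v}
  zero_mem' := memL2V_zero_iff_memLp.2 MemLp.zero
  add_mem' hv hw :=
    memL2V_zero_iff_memLp.2 ((memL2V_zero_iff_memLp.1 hv).add (memL2V_zero_iff_memLp.1 hw))
  smul_mem' c _ hv := memL2V_zero_iff_memLp.2 ((memL2V_zero_iff_memLp.1 hv).const_smul c)

namespace Coeff

variable {Ω : Set (Euc N)} (M : Coeff N Ω) {v w : Euc N → Euc N}

/-- `L²(Ω;ℝ^N)` with the semi-inner product `⟨·,·⟩_A` and the seminorm `‖·‖_A`. It is a copy of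
`l2Fields Ω`, so that these instances depend on the coefficient field. -/
def EnergySpace (_ : Coeff N Ω) : Type := l2Fields Ω

namespace EnergySpace

instance : AddCommGroup M.EnergySpace := inferInstanceAs (AddCommGroup (l2Fields Ω))

instance : Module ℝ M.EnergySpace := inferInstanceAs (Module ℝ (l2Fields Ω))

instance : PreInnerProductSpace.Core ℝ M.EnergySpace where
  inner v w := ipA Ω M.A v.1 w.1
  conj_inner_symm v w := M.ipA_comm w.1 v.1
  re_inner_nonneg v := M.sqA_nonneg v.1
  add_left u v w := by
    refine Eq.trans ?_ (integral_add (M.integrable_inner_apply u.2 w.2)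
      (M.integrable_inner_apply v.2 w.2))
    exact integral_congr_ae (.of_forall fun x => by
      simp only [← inner_add_left, ← map_add]; rfl)
  smul_left v w r := by
    refine Eq.trans ?_ (integral_const_mul r _)
    exact integral_congr_ae (.of_forall fun x => by
      simp only [← real_inner_smul_left, ← map_smul]; rfl)

instance : SeminormedAddCommGroup M.EnergySpace :=
  InnerProductSpace.Core.toSeminormedAddCommGroup (𝕜 := ℝ)

instance : InnerProductSpace ℝ M.EnergySpace := InnerProductSpace.ofCore inferInstance

lemma inner_def (v w : M.EnergySpace) : ⟪v, w⟫ = ipA Ω M.A v.1 w.1 := rfl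

lemma norm_def (v : M.EnergySpace) : ‖v‖ = nrmA Ω M.A v.1 := rfl

end EnergySpace

end Coeff

section Energy

variable {Ω : Set (Euc N)} (M : Coeff N Ω) {v w : Euc N → Euc N}

namespace Coeff

lemma nrmL2V_le_α_mul_nrmA (hv : MemL2V Ω 0 v) : nrmL2V Ω 0 v ≤ M.α * nrmA Ω M.A v := by
  have hα := M.α_pos
  refine le_of_sq_le_sq ?_ (mul_nonneg hα.le (Real.sqrt_nonneg _))
  rw [nrmL2V_zero_sq, mul_pow, nrmA, Real.sq_sqrt (M.sqA_nonneg v), sqA, ipA,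
    ← integral_const_mul]
  refine integral_mono_ae ((memL2V_zero_iff_memLp.1 hv).integrable_norm_pow two_ne_zero)
    ((M.integrable_inner_apply hv hv).const_mul _) (M.coer.mono fun x hx => ?_)
  calc ‖v x‖ ^ 2 = M.α ^ 2 * (M.α⁻¹ ^ 2 * ‖v x‖ ^ 2) := by field_simp
    _ ≤ M.α ^ 2 * ⟪M.A x (v x), v x⟫ := by gcongr; exact hx (v x)

lemma exists_nrmA_le_mul_nrmL2V :
    ∃ K : ℝ, ∀ v, MemL2V Ω 0 v → nrmA Ω M.A v ≤ K * nrmL2V Ω 0 v := by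
  obtain ⟨C, hC⟩ := M.bdd
  refine ⟨√|C|, fun v hv => Real.sqrt_le_iff.2
    ⟨mul_nonneg (Real.sqrt_nonneg _) (Real.sqrt_nonneg _), ?_⟩⟩
  rw [mul_pow, Real.sq_sqrt (abs_nonneg C), nrmL2V_zero_sq, sqA, ipA, ← integral_const_mul]
  refine integral_mono_ae (M.integrable_inner_apply hv hv)
    (((memL2V_zero_iff_memLp.1 hv).integrable_norm_pow two_ne_zero).const_mul _)
    (hC.mono fun x hx => ?_)
  calc ⟪M.A x (v x), v x⟫ ≤ ‖M.A x (v x)‖ * ‖v x‖ := real_inner_le_norm _ _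
    _ ≤ |C| * ‖v x‖ * ‖v x‖ := by
      gcongr; exact (hx (v x)).trans (by gcongr; exact le_abs_self C)
    _ = |C| * ‖v x‖ ^ 2 := by ring

lemma ipA_le_of_memG {e g : Euc N → Euc N} {κ : ℝ} (he : MemL2V Ω 0 e)
    (htest : ∀ φ, IsTest Ω φ → ipA Ω M.A e (gradient φ) ≤ κ * nrmA Ω M.A (gradient φ))
    (hg : MemG Ω g) : ipA Ω M.A e g ≤ κ * nrmA Ω M.A g := by
  obtain ⟨hgL2, φ, hφ, hlim⟩ := hg
  obtain ⟨K, hK⟩ := M.exists_nrmA_le_mul_nrmL2V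
  let e' : M.EnergySpace := ⟨e, he⟩
  let g' : M.EnergySpace := ⟨g, hgL2⟩
  let ψ (n : ℕ) : M.EnergySpace := ⟨gradient (φ n), (hφ n).memL2V_gradient⟩
  have hbound (n : ℕ) : ‖ψ n - g'‖ ≤ K * nrmL2V Ω 0 (fun x => g x - gradient (φ n) x) := by
    rw [norm_sub_rev, EnergySpace.norm_def]
    exact hK _ (g' - ψ n).2
  have hψ : Tendsto ψ atTop (𝓝 g') := tendsto_iff_norm_sub_tendsto_zero.2 <|
    squeeze_zero (fun n => norm_nonneg _) hbound (by simpa only [mul_zero] using hlim.const_mul K)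
  have hclosed : ⟪e', g'⟫ ≤ κ * ‖g'‖ :=
    le_of_tendsto_of_tendsto' (tendsto_const_nhds.inner hψ) (hψ.norm.const_mul κ) fun n => by
      simpa only [EnergySpace.inner_def, EnergySpace.norm_def] using htest _ (hφ n)
  simpa only [EnergySpace.inner_def, EnergySpace.norm_def] using hclosed

lemma sqA_sub_le_of_ipA_sub_le {x y p q : Euc N → Euc N} {κ θ : ℝ} (hx : MemL2V Ω 0 x)
    (hy : MemL2V Ω 0 y) (hp : MemL2V Ω 0 p) (hq : MemL2V Ω 0 q) (hκ : 0 ≤ κ) (hθ : 0 < θ)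
    (h : ipA Ω M.A (x - q) (x - y) ≤ κ * nrmA Ω M.A (x - y)) :
    sqA Ω M.A (x - p) ≤
      (1 + 4 / θ) * (κ + nrmA Ω M.A (p - q)) ^ 2 + (4 + θ) * sqA Ω M.A (y - p) := by
  let x' : M.EnergySpace := ⟨x, hx⟩
  let y' : M.EnergySpace := ⟨y, hy⟩
  let p' : M.EnergySpace := ⟨p, hp⟩
  let q' : M.EnergySpace := ⟨q, hq⟩
  have key := norm_sub_sq_le_of_inner_sub_le (x := x') (y := y') (q := q') hκ h hθ p'
  rwa [← real_inner_self_eq_norm_sq (x' - p'), ← real_inner_self_eq_norm_sq (y' - p')] at key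

end Coeff

variable {M} {f dv : Euc N → ℝ} {gu : Euc N → Euc N}

lemma ipA_sub_gradient_eq (hf : MemL2 Ω 1 f) (hdv : MemL2 Ω 1 dv) (hgu : MemL2V Ω 0 gu)
    (hweak : ∀ φ : Euc N → ℝ, IsTest Ω φ →
      (∫ x in Ω, ⟪M.A x (gu x), gradient φ x⟫) = ∫ x in Ω, f x * φ x)
    (hdiv : IsWeakDiv Ω v dv) (hw : IsAInv Ω M.A v w) {φ : Euc N → ℝ} (hφ : IsTest Ω φ) :
    ipA Ω M.A (gu - w) (gradient φ) = ∫ x in Ω, (f x + dv x) * φ x := by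
  have hgrad := hφ.memL2V_gradient
  have hflux : ∫ x in Ω, ⟪M.A x (w x), gradient φ x⟫ = -∫ x in Ω, dv x * φ x := by
    rw [← hdiv φ hφ]
    exact integral_congr_ae (hw.2.mono fun x hx => by simp only [hx])
  simp only [ipA, Pi.sub_apply, map_sub, inner_sub_left, add_mul]
  rw [integral_sub (M.integrable_inner_apply hgu hgrad) (M.integrable_inner_apply hw.1 hgrad),
    integral_add (hf.integrable_mul (hφ.memL2 (-1))) (hdv.integrable_mul (hφ.memL2 (-1))),
    hweak φ hφ, hflux, sub_neg_eq_add]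

lemma ipA_sub_gradient_le (hN : 3 ≤ N) (hf : MemL2 Ω 1 f) (hdv : MemL2 Ω 1 dv)
    (hgu : MemL2V Ω 0 gu)
    (hweak : ∀ φ : Euc N → ℝ, IsTest Ω φ →
      (∫ x in Ω, ⟪M.A x (gu x), gradient φ x⟫) = ∫ x in Ω, f x * φ x)
    (hdiv : IsWeakDiv Ω v dv) (hw : IsAInv Ω M.A v w) {φ : Euc N → ℝ} (hφ : IsTest Ω φ) :
    ipA Ω M.A (gu - w) (gradient φ) ≤
      M.α * cN N * nrmL2 Ω 1 (fun x => f x + dv x) * nrmA Ω M.A (gradient φ) := by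
  have hcN : 0 ≤ cN N := cN_nonneg (by lia)
  have hres : 0 ≤ nrmL2 Ω 1 fun x => f x + dv x := Real.sqrt_nonneg _
  calc ipA Ω M.A (gu - w) (gradient φ)
      = ∫ x in Ω, (f x + dv x) * φ x := ipA_sub_gradient_eq hf hdv hgu hweak hdiv hw hφ
    _ ≤ nrmL2 Ω 1 (fun x => f x + dv x) * nrmL2 Ω (-1) φ :=
      (hf.add hdv).integral_mul_le (hφ.memL2 (-1))
    _ ≤ nrmL2 Ω 1 (fun x => f x + dv x) * (cN N * (M.α * nrmA Ω M.A (gradient φ))) := by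
      gcongr
      exact (hφ.nrmL2_le_cN_mul_nrmL2V_gradient hN).trans
        (by gcongr; exact M.nrmL2V_le_α_mul_nrmA hφ.memL2V_gradient)
    _ = M.α * cN N * nrmL2 Ω 1 (fun x => f x + dv x) * nrmA Ω M.A (gradient φ) := by ring

end Energy

theorem stmt_18_general {Ω : Set (Euc N)} (hN : 3 ≤ N) (M : Coeff N Ω)
    {f dv : Euc N → ℝ} {gu gu' wt v w : Euc N → Euc N} {θ : ℝ}
    (hf : MemL2 Ω 1 f) (hgu : MemL2V Ω 0 gu)
    (hweak : ∀ φ : Euc N → ℝ, IsTest Ω φ →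
      (∫ x in Ω, ⟪M.A x (gu x), gradient φ x⟫) = ∫ x in Ω, f x * φ x)
    (hwt : MemL2V Ω 0 wt) (hθ : 0 < θ) (hdv : MemL2 Ω 1 dv) (hdiv : IsWeakDiv Ω v dv)
    (hw : IsAInv Ω M.A v w) (hG : MemG Ω (gu - gu')) :
    sqA Ω M.A (gu - wt) ≤
      (1 + 4 / θ) * (M.α * cN N * nrmL2 Ω 1 (f + dv) + nrmA Ω M.A (wt - w)) ^ 2 +
        (4 + θ) * sqA Ω M.A (gu' - wt) := by
  have hgu' : gu' ∈ l2Fields Ω := by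
    simpa only [sub_sub_cancel] using (l2Fields Ω).sub_mem hgu hG.1
  have hκ : 0 ≤ M.α * cN N * nrmL2 Ω 1 (f + dv) :=
    mul_nonneg (mul_nonneg M.α_pos.le (cN_nonneg (by lia))) (Real.sqrt_nonneg _)
  have hresidual : ipA Ω M.A (gu - w) (gu - gu') ≤
      M.α * cN N * nrmL2 Ω 1 (f + dv) * nrmA Ω M.A (gu - gu') :=
    M.ipA_le_of_memG ((l2Fields Ω).sub_mem hgu hw.1)
      (fun _ hφ => ipA_sub_gradient_le hN hf hdv hgu hweak hdiv hw hφ) hG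
  exact M.sqA_sub_le_of_ipA_sub_le hgu hgu' hwt hw.1 hκ hθ hresidual

/-- Weaker non-conforming upper bound via the triangle inequality:
`‖E‖²_A ≤ (1 + 4/θ) M₊² + (4 + θ) M̃₊²` for every `θ > 0`. -/
theorem stmt_18 (Ω : Set (Euc N)) (hΩ : IsOpen Ω) (hN : 3 ≤ N) (M : Coeff N Ω)
    (f : Euc N → ℝ) (hf : MemL2 Ω 1 f)
    (uh : Euc N → ℝ) (gu : Euc N → Euc N)
    (huh : MemL2 Ω (-1) uh) (hgu : MemL2V Ω 0 gu) (hguw : IsWeakGrad Ω uh gu)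
    (hweak : ∀ φ : Euc N → ℝ, IsTest Ω φ →
      (∫ x in Ω, ⟪M.A x (gu x), gradient φ x⟫) = ∫ x in Ω, f x * φ x)
    (vt : Euc N → Euc N) (hvt : MemL2V Ω 0 vt)
    (wt : Euc N → Euc N) (hwt : IsAInv Ω M.A vt wt) :
    ∀ θ : ℝ, 0 < θ →
    ∀ (v : Euc N → Euc N) (dv : Euc N → ℝ) (w : Euc N → Euc N),
      MemL2V Ω 0 v → MemL2 Ω 1 dv → IsWeakDiv Ω v dv → IsAInv Ω M.A v w →
    ∀ (u : Euc N → ℝ) (gu' : Euc N → Euc N),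
      MemL2 Ω (-1) u → MemL2V Ω 0 gu' → IsWeakGrad Ω u gu' →
      MemH10 Ω (fun x => uh x - u x) (fun x => gu x - gu' x) →
      sqA Ω M.A (fun x => gu x - wt x) ≤
        (1 + 4 / θ) * (M.α * cN N * nrmL2 Ω 1 (fun x => f x + dv x) +
            nrmA Ω M.A (fun x => wt x - w x)) ^ 2 +
          (4 + θ) * sqA Ω M.A (fun x => gu' x - wt x) := by
  intro θ hθ v dv w _ hdv hdiv hw u gu' _ _ _ ⟨_, hg, _, happrox⟩
  exact stmt_18_general hN M hf hgu hweak hwt.1 hθ hdv hdiv hw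
    ⟨hg, happrox.imp fun _ h => ⟨h.1, h.2.2⟩⟩
end
end
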